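/- Assume dim A1 ≤ 1 and let A be a finite-dimensional subspace of V with A1 < A (so A1 is a proper subspace of A, and π(A) = A1 since π fixes A1 pointwise). Then for every r ∈ ℕ and every finite-dimensional subspace B ∈ K_{A1} with A ≤ B, there exists a finite-dimensional subspace C ∈ K_{A1} such that for every coloring ξ : {U ≤ C : π(U) = A1 and dim U = dim A} → {0, ..., r−1} there exists a subspace B' ≤ C with π(B') = A1 and dim B' = dim B such that ξ is constant on the set {U ≤ B' : π(U) = A1 and dim U = dim A}. -/

import Mathlib

open Module Submodule

/-!
Let `W` be the image of `π`. A subspace `U` with `π(U) = W` is a space over `W`, and we measure it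
by its excess `dim U - dim W`. In a product `E × F`, a subspace is either the graph of a linear map
on its shadow in `E`, or the cylinder over its shadow. The Hales–Jewett theorem for the alphabet
`E →ₗ[F] F`, applied to graphs of linear maps `E → F^ι`, gives a copy of `E × F` inside
`E × F^ι` over `E` in which the colour of a graph depends only on its shadow. There, a graph is
coloured through a shadow of the same excess, and a cylinder through a shadow whose excess is one
smaller. The Ramsey property follows by induction on the excess of the coloured subspaces and, for
a given excess, on the excesses that the monochromatic subspaces of the various colours must have.
-/

section Ring

variable {R M N : Type*} [Ring R] [AddCommGroup M] [Module R M] [AddCommGroup N] [Module R N]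

lemma map_eq_range_iff_map_rangeRestrict_eq_top (f : M →ₗ[R] N) (U : Submodule R M) :
    U.map f = LinearMap.range f ↔ U.map f.rangeRestrict = ⊤ := by
  rw [← (map_injective_of_injective (LinearMap.range f).injective_subtype).eq_iff,
    ← Submodule.map_comp, map_subtype_top, LinearMap.rangeRestrict,
    LinearMap.subtype_comp_codRestrict]

lemma finrank_map_of_disjoint_ker {f : M →ₗ[R] N} {U : Submodule R M}
    (h : Disjoint U (LinearMap.ker f)) : finrank R (U.map f) = finrank R U := by
  rw [← LinearMap.range_domRestrict]
  exact LinearMap.finrank_range_of_inj (LinearMap.injective_domRestrict_iff.2 h)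

lemma finrank_map_of_injective {f : M →ₗ[R] N} (hf : Function.Injective f) (U : Submodule R M) :
    finrank R (U.map f) = finrank R U :=
  finrank_map_of_disjoint_ker (LinearMap.ker_eq_bot.2 hf ▸ disjoint_bot_right)

end Ring

section LinearAlgebra

variable {F X Y E G : Type*} [DivisionRing F] [AddCommGroup X] [Module F X]
  [AddCommGroup Y] [Module F Y] [AddCommGroup E] [Module F E] [AddCommGroup G] [Module F G]

lemma finrank_submodule_prod (U : Submodule F X) (T : Submodule F Y) [FiniteDimensional F U]
    [FiniteDimensional F T] : finrank F (U.prod T) = finrank F U + finrank F T := by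
  have hrange : LinearMap.range (U.subtype.prodMap T.subtype) = U.prod T := by
    rw [LinearMap.range_prodMap, range_subtype, range_subtype]
  rw [← hrange, LinearMap.finrank_range_of_inj
    (U.injective_subtype.prodMap T.injective_subtype), finrank_prod]

lemma natCast_le_rank_ker_of_aleph0_le_rank (f : X →ₗ[F] Y)
    [FiniteDimensional F (LinearMap.range f)] (hX : Cardinal.aleph0 ≤ Module.rank F X) (n : ℕ) :
    (n : Cardinal) ≤ Module.rank F (LinearMap.ker f) := by
  refine Cardinal.natCast_le_aleph0.trans (le_of_not_gt fun hker ↦ hX.not_gt ?_)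
  have : FiniteDimensional F (LinearMap.ker f) := rank_lt_aleph0_iff.1 hker
  have : FiniteDimensional F (X ⧸ LinearMap.ker f) :=
    f.quotKerEquivRange.symm.finiteDimensional
  exact rank_lt_aleph0_iff.2 (Module.Finite.of_submodule_quotient (LinearMap.ker f))

lemma exists_injective_comp_eq_fst {q : X →ₗ[F] Y} (hq : Function.Surjective q) {n : ℕ}
    (hn : (n : Cardinal) ≤ Module.rank F (LinearMap.ker q)) :
    ∃ J : Y × (Fin n → F) →ₗ[F] X,
      Function.Injective J ∧ q ∘ₗ J = LinearMap.fst F Y (Fin n → F) := by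
  obtain ⟨f, hf⟩ := le_rank_iff_exists_linearMap.1 hn
  obtain ⟨t, ht⟩ := q.exists_rightInverse_of_surjective (LinearMap.range_eq_top.2 hq)
  have hqt (y : Y) : q (t y) = y := LinearMap.congr_fun ht y
  have hqJ : q ∘ₗ t.coprod ((LinearMap.ker q).subtype ∘ₗ f) = LinearMap.fst F Y (Fin n → F) := by
    ext <;> simp [hqt]
  refine ⟨t.coprod ((LinearMap.ker q).subtype ∘ₗ f), ?_, hqJ⟩
  rw [injective_iff_map_eq_zero]
  rintro ⟨y, a⟩ hya
  obtain rfl : y = 0 := by simpa [hya] using (LinearMap.congr_fun hqJ (y, a)).symm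
  have hfa : f a = 0 := Subtype.ext (by simpa using hya)
  rw [(map_eq_zero_iff f hf).1 hfa, Prod.mk_zero_zero]

lemma exists_eq_map_id_prod_of_disjoint_ker_fst {U : Submodule F (E × G)}
    (hU : Disjoint U (LinearMap.ker (LinearMap.fst F E G))) :
    ∃ x : E →ₗ[F] G, U = (U.map (LinearMap.fst F E G)).map (LinearMap.id.prod x) := by
  obtain ⟨g, hg⟩ := ((LinearMap.fst F E G).domRestrict U).exists_leftInverse_of_injective
    (LinearMap.ker_eq_bot.2 (LinearMap.injective_domRestrict_iff.2 hU))
  have hgU (u : E × G) (hu : u ∈ U) : (g u.1 : E × G) = u :=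
    congrArg Subtype.val (LinearMap.congr_fun hg ⟨u, hu⟩)
  let x : E →ₗ[F] G := LinearMap.snd F E G ∘ₗ U.subtype ∘ₗ g
  have hfix (u : E × G) (hu : u ∈ U) : LinearMap.id.prod x (LinearMap.fst F E G u) = u :=
    Prod.ext rfl (congrArg Prod.snd (hgU u hu) :)
  refine ⟨x, SetLike.coe_injective ?_⟩
  rw [map_coe, map_coe, Set.image_image, Set.image_congr hfix, Set.image_id']

lemma eq_prod_top_of_not_disjoint_ker_fst {U : Submodule F (E × F)}
    (hU : ¬ Disjoint U (LinearMap.ker (LinearMap.fst F E F))) :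
    U = (U.map (LinearMap.fst F E F)).prod ⊤ := by
  obtain ⟨⟨e, c⟩, hu, hk, h0⟩ : ∃ u ∈ U, LinearMap.fst F E F u = 0 ∧ u ≠ 0 := by
    simpa [Submodule.disjoint_def] using hU
  obtain rfl : e = 0 := hk
  have hc : c ≠ 0 := by simpa using h0
  refine le_antisymm (fun u hu ↦ ⟨mem_map_of_mem hu, trivial⟩) ?_
  rintro ⟨a, b⟩ ⟨⟨⟨a', b'⟩, hv, hva⟩, -⟩
  obtain rfl : a' = a := hva
  simpa [hc] using U.add_mem hv (U.smul_mem ((b - b') / c) hu)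

end LinearAlgebra

section Covers

variable {F X Y W E : Type*} [DivisionRing F] [AddCommGroup X] [Module F X]
  [AddCommGroup Y] [Module F Y] [AddCommGroup W] [Module F W] [AddCommGroup E] [Module F E]

/-- The subspace `U` is mapped by `p` onto `W` and has excess `d`, that is, dimension
`dim W + d`; meant for finite-dimensional `U`, since `finrank` is `0` otherwise. For `p` the map
`π` onto its image these are the members of `K_{A1}` of dimension `dim A1 + d`. -/
structure Covers (p : X →ₗ[F] W) (d : ℕ) (U : Submodule F X) : Prop where
  map_eq_top : U.map p = ⊤
  finrank_eq : finrank F U = finrank F W + d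

lemma covers_iff {p : X →ₗ[F] W} {d : ℕ} {U : Submodule F X} :
    Covers p d U ↔ U.map p = ⊤ ∧ finrank F U = finrank F W + d :=
  ⟨fun h ↦ ⟨h.map_eq_top, h.finrank_eq⟩, fun h ↦ ⟨h.1, h.2⟩⟩

lemma covers_map_iff {J : X →ₗ[F] Y} (hJ : Function.Injective J) {q : Y →ₗ[F] W} {d : ℕ}
    {U : Submodule F X} : Covers q d (U.map J) ↔ Covers (q ∘ₗ J) d U := by
  simp only [covers_iff, ← Submodule.map_comp, finrank_map_of_injective hJ]

lemma covers_id_top : Covers (LinearMap.id : W →ₗ[F] W) 0 ⊤ :=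
  ⟨Submodule.map_id ⊤, finrank_top F W⟩

namespace Covers

variable {p : E →ₗ[F] W} {d : ℕ}

lemma prod_bot {U : Submodule F E} (hU : Covers p d U) :
    Covers (p ∘ₗ LinearMap.fst F E F) d (U.prod ⊥) := by
  rw [← map_inl, covers_map_iff LinearMap.inl_injective, LinearMap.comp_assoc,
    LinearMap.fst_comp_inl, LinearMap.comp_id]
  exact hU

lemma prod_top_iff {U : Submodule F E} [FiniteDimensional F U] :
    Covers (p ∘ₗ LinearMap.fst F E F) (d + 1) (U.prod ⊤) ↔ Covers p d U := by
  simp only [covers_iff, Submodule.map_comp, prod_map_fst, finrank_submodule_prod, finrank_top,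
    finrank_self, ← add_assoc, add_left_inj]

lemma map_fst {U : Submodule F (E × F)} (hU : Covers (p ∘ₗ LinearMap.fst F E F) d U)
    (hdisj : Disjoint U (LinearMap.ker (LinearMap.fst F E F))) :
    Covers p d (U.map (LinearMap.fst F E F)) :=
  ⟨by rw [← Submodule.map_comp, hU.map_eq_top],
    by rw [finrank_map_of_disjoint_ker hdisj, hU.finrank_eq]⟩

lemma disjoint_ker {U : Submodule F E} [FiniteDimensional F U] (hU : Covers p 0 U) :
    Disjoint U (LinearMap.ker p) :=
  disjoint_ker_of_finrank_le p (by rw [hU.map_eq_top, finrank_top, hU.finrank_eq, add_zero])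

lemma surjective_comp_subtype {S : Submodule F E} (hS : Covers p d S) :
    Function.Surjective (p ∘ₗ S.subtype) := by
  rw [← LinearMap.range_eq_top, LinearMap.range_comp, range_subtype, hS.map_eq_top]

lemma rank_ker_comp_subtype {S : Submodule F E} [FiniteDimensional F S] (hS : Covers p d S) :
    Module.rank F (LinearMap.ker (p ∘ₗ S.subtype)) = d := by
  have hrank := (p ∘ₗ S.subtype).finrank_range_add_finrank_ker
  rw [LinearMap.range_eq_top.2 hS.surjective_comp_subtype, finrank_top, hS.finrank_eq] at hrank
  rw [← finrank_eq_rank, Nat.add_left_cancel hrank]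

end Covers

end Covers

section RamseyArrow

variable {F X Y W κ : Type*} [DivisionRing F] [AddCommGroup X] [Module F X]
  [AddCommGroup Y] [Module F Y] [AddCommGroup W] [Module F W]

/-- The colouring `χ` gives the colour `c` to all subspaces of `S` that cover `W` with
excess `d`. -/
def IsMonochromatic (p : X →ₗ[F] W) (d : ℕ) (χ : Submodule F X → κ) (c : κ)
    (S : Submodule F X) : Prop :=
  ∀ U ≤ S, Covers p d U → χ U = c

/-- The asymmetric Ramsey arrow: each colouring of the subspaces of `X` admits, for some
colour `c`, a subspace of excess `s c` over `W` whose subspaces of excess `d` over `W` all have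
colour `c`. -/
def RamseyArrow (p : X →ₗ[F] W) (d : ℕ) (s : κ → ℕ) : Prop :=
  ∀ χ : Submodule F X → κ, ∃ c S, Covers p (s c) S ∧ IsMonochromatic p d χ c S

lemma IsMonochromatic.mono {p : X →ₗ[F] W} {d : ℕ} {χ : Submodule F X → κ} {c : κ}
    {S T : Submodule F X} (hS : IsMonochromatic p d χ c S) (hTS : T ≤ S) :
    IsMonochromatic p d χ c T :=
  fun U hU ↦ hS U (hU.trans hTS)

lemma IsMonochromatic.map {J : X →ₗ[F] Y} (hJ : Function.Injective J) {q : Y →ₗ[F] W} {d : ℕ}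
    {χ : Submodule F Y → κ} {c : κ} {S : Submodule F X}
    (hS : IsMonochromatic (q ∘ₗ J) d (fun U ↦ χ (U.map J)) c S) :
    IsMonochromatic q d χ c (S.map J) := by
  intro U hU hUq
  obtain ⟨U', rfl⟩ : ∃ U' : Submodule F X, U'.map J = U :=
    ⟨U.comap J, map_comap_eq_self (hU.trans LinearMap.map_le_range)⟩
  exact hS U' ((map_le_map_iff_of_injective hJ U' S).1 hU) ((covers_map_iff hJ).1 hUq)

lemma RamseyArrow.exists_le_range {J : X →ₗ[F] Y} (hJ : Function.Injective J) {q : Y →ₗ[F] W}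
    {d : ℕ} {s : κ → ℕ} (h : RamseyArrow (q ∘ₗ J) d s) (χ : Submodule F Y → κ) :
    ∃ c, ∃ S ≤ LinearMap.range J, Covers q (s c) S ∧ IsMonochromatic q d χ c S := by
  obtain ⟨c, S, hS, hSc⟩ := h fun U ↦ χ (U.map J)
  exact ⟨c, S.map J, LinearMap.map_le_range, (covers_map_iff hJ).2 hS, hSc.map hJ⟩

lemma RamseyArrow.of_injective {J : X →ₗ[F] Y} (hJ : Function.Injective J) {q : Y →ₗ[F] W}
    {d : ℕ} {s : κ → ℕ} (h : RamseyArrow (q ∘ₗ J) d s) : RamseyArrow q d s := fun χ ↦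
  let ⟨c, S, _, hS⟩ := h.exists_le_range hJ χ
  ⟨c, S, hS⟩

lemma RamseyArrow.exists_fst [FiniteDimensional F X] {p : X →ₗ[F] W} {d : ℕ} {s : κ → ℕ}
    (h : RamseyArrow p d s) : ∃ n, RamseyArrow (LinearMap.fst F W (Fin n → F)) d s :=
  have hinj : Function.Injective (p.prod (finBasis F X).equivFun.toLinearMap) := fun _ _ hxy ↦
    (finBasis F X).equivFun.injective (congrArg Prod.snd hxy)
  ⟨finrank F X, .of_injective hinj h⟩

lemma RamseyArrow.exists_le_of_covers {n d : ℕ} {s : κ → ℕ}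
    (h : RamseyArrow (LinearMap.fst F W (Fin n → F)) d s) {p : X →ₗ[F] W} {m : ℕ}
    {S : Submodule F X} [FiniteDimensional F S] (hS : Covers p m S) (hnm : n ≤ m)
    (χ : Submodule F X → κ) :
    ∃ c, ∃ T ≤ S, Covers p (s c) T ∧ IsMonochromatic p d χ c T := by
  obtain ⟨J, hJ, hpJ⟩ := exists_injective_comp_eq_fst hS.surjective_comp_subtype
    (hS.rank_ker_comp_subtype ▸ Nat.cast_le.2 hnm)
  rw [← hpJ, LinearMap.comp_assoc] at h
  obtain ⟨c, T, hT, hTc⟩ :=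
    h.exists_le_range (J := S.subtype ∘ₗ J) (S.injective_subtype.comp hJ) χ
  exact ⟨c, T, hT.trans ((LinearMap.range_comp_le_range J S.subtype).trans S.range_subtype.le),
    hTc⟩

lemma ramseyArrow_id_zero : RamseyArrow (LinearMap.id : W →ₗ[F] W) 0 (fun _ : κ ↦ 0) := fun χ ↦
  ⟨χ ⊤, ⊤, covers_id_top, fun U _ hU ↦ by rw [← hU.map_eq_top, Submodule.map_id]⟩

lemma ramseyArrow_id_succ [FiniteDimensional F W] (d : ℕ) {s : κ → ℕ} {c : κ} (hc : s c = 0) :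
    RamseyArrow (LinearMap.id : W →ₗ[F] W) (d + 1) s := by
  refine fun _ ↦ ⟨c, ⊤, hc ▸ covers_id_top, fun U _ hU ↦ ?_⟩
  have := U.finrank_le
  have := hU.finrank_eq
  omega

end RamseyArrow

section Shadow

variable {F E W κ : Type*} [DivisionRing F] [AddCommGroup E] [Module F E]
  [AddCommGroup W] [Module F W]

/-- The colour of a graph over a subspace `T` of `E` depends only on `T`. The graphs in `E × F`
are the subspaces meeting the vertical axis `ker fst` trivially. -/
def DependsOnShadow (χ : Submodule F (E × F) → κ) : Prop :=
  ∀ U, Disjoint U (LinearMap.ker (LinearMap.fst F E F)) →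
    χ U = χ ((U.map (LinearMap.fst F E F)).prod ⊥)

variable {p : E →ₗ[F] W} {d : ℕ} {χ : Submodule F (E × F) → κ} {c : κ} {T : Submodule F E}

lemma IsMonochromatic.apply_eq_of_disjoint (hχ : DependsOnShadow χ)
    (hT : IsMonochromatic p d (fun U ↦ χ (U.prod ⊥)) c T) {U : Submodule F (E × F)}
    (hUT : U.map (LinearMap.fst F E F) ≤ T) (hU : Covers (p ∘ₗ LinearMap.fst F E F) d U)
    (hdisj : Disjoint U (LinearMap.ker (LinearMap.fst F E F))) : χ U = c :=
  (hχ U hdisj).trans (hT _ hUT (hU.map_fst hdisj))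

lemma IsMonochromatic.prod_bot (hχ : DependsOnShadow χ)
    (hT : IsMonochromatic p d (fun U ↦ χ (U.prod ⊥)) c T) :
    IsMonochromatic (p ∘ₗ LinearMap.fst F E F) d χ c (T.prod ⊥) := by
  intro U hU hUd
  refine hT.apply_eq_of_disjoint hχ ((Submodule.map_mono hU).trans (prod_map_fst T ⊥).le) hUd ?_
  rw [Submodule.disjoint_def]
  exact fun u hu hu0 ↦ Prod.ext hu0 (hU hu).2

lemma IsMonochromatic.prod_top_zero [FiniteDimensional F E] (hχ : DependsOnShadow χ)
    (hT : IsMonochromatic p 0 (fun U ↦ χ (U.prod ⊥)) c T) :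
    IsMonochromatic (p ∘ₗ LinearMap.fst F E F) 0 χ c (T.prod ⊤) := fun _ hU hU0 ↦
  hT.apply_eq_of_disjoint hχ ((Submodule.map_mono hU).trans (prod_map_fst T ⊤).le) hU0
    (hU0.disjoint_ker.mono_right (LinearMap.ker_le_ker_comp _ _))

lemma IsMonochromatic.prod_top_succ [FiniteDimensional F E] (hχ : DependsOnShadow χ)
    (hgraph : IsMonochromatic p (d + 1) (fun U ↦ χ (U.prod ⊥)) c T)
    (hcyl : IsMonochromatic p d (fun U ↦ χ (U.prod ⊤)) c T) :
    IsMonochromatic (p ∘ₗ LinearMap.fst F E F) (d + 1) χ c (T.prod ⊤) := by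
  intro U hU hUd
  have hUT : U.map (LinearMap.fst F E F) ≤ T := (Submodule.map_mono hU).trans (prod_map_fst T ⊤).le
  by_cases hdisj : Disjoint U (LinearMap.ker (LinearMap.fst F E F))
  · exact hgraph.apply_eq_of_disjoint hχ hUT hUd hdisj
  · have hUcyl := eq_prod_top_of_not_disjoint_ker_fst hdisj
    rw [hUcyl] at hUd ⊢
    exact hcyl _ hUT (Covers.prod_top_iff.1 hUd)

end Shadow

section HalesJewett

variable {F E : Type*} [Field F] [AddCommGroup E] [Module F E]

/-- The embedding over `E` of `E × F` into `E × F^ι` attached to a combinatorial line `l` in the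
set `(E →ₗ[F] F)^ι` of linear maps `E → F^ι`: active coordinates of `l` read off the factor `F`,
so that the graph of `x` is sent to the graph of the point `l x`. -/
def lineEmbedding {ι : Type*} (l : Combinatorics.Line (E →ₗ[F] F) ι) :
    E × F →ₗ[F] E × (ι → F) :=
  (LinearMap.fst F E F).prod <| LinearMap.pi fun i ↦
    (l.idxFun i).elim (LinearMap.snd F E F) (· ∘ₗ LinearMap.fst F E F)

lemma fst_comp_lineEmbedding {ι : Type*} (l : Combinatorics.Line (E →ₗ[F] F) ι) :
    LinearMap.fst F E (ι → F) ∘ₗ lineEmbedding l = LinearMap.fst F E F :=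
  rfl

lemma lineEmbedding_comp_id_prod {ι : Type*} (l : Combinatorics.Line (E →ₗ[F] F) ι)
    (x : E →ₗ[F] F) :
    lineEmbedding l ∘ₗ LinearMap.id.prod x = LinearMap.id.prod (LinearMap.pi (l x)) := by
  refine LinearMap.ext fun e ↦ Prod.ext rfl (funext fun i ↦ ?_)
  cases h : l.idxFun i <;> simp [lineEmbedding, h]

lemma lineEmbedding_injective {ι : Type*} (l : Combinatorics.Line (E →ₗ[F] F) ι) :
    Function.Injective (lineEmbedding l) := by
  obtain ⟨i, hi⟩ := l.proper
  rintro ⟨e, a⟩ ⟨e', a'⟩ h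
  have hsnd := congrFun (congrArg Prod.snd h) i
  obtain rfl : e = e' := congrArg Prod.fst h
  exact Prod.ext rfl (by simpa [lineEmbedding, hi] using hsnd)

variable (F E) in
lemma exists_dependsOnShadow [Finite F] [FiniteDimensional F E] (κ : Type*) [Finite κ] :
    ∃ (ι : Type) (_ : Fintype ι), ∀ χ : Submodule F (E × (ι → F)) → κ,
      ∃ J : E × F →ₗ[F] E × (ι → F), Function.Injective J ∧
        LinearMap.fst F E (ι → F) ∘ₗ J = LinearMap.fst F E F ∧
        DependsOnShadow fun U ↦ χ (U.map J) := by
  have : Finite E := finite_of_finite F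
  have : Finite (E →ₗ[F] F) := finite_of_finite F
  have : Finite (Submodule F E) := Finite.of_injective _ SetLike.coe_injective
  obtain ⟨ι, _, hι⟩ :=
    Combinatorics.Line.exists_mono_in_high_dimension (E →ₗ[F] F) (Submodule F E → κ)
  refine ⟨ι, inferInstance, fun χ ↦ ?_⟩
  obtain ⟨l, c, hl⟩ := hι fun w T ↦ χ (T.map (LinearMap.id.prod (LinearMap.pi w)))
  have hgraph (x : E →ₗ[F] F) (T : Submodule F E) :
      χ ((T.map (LinearMap.id.prod x)).map (lineEmbedding l)) = c T := by
    rw [← Submodule.map_comp, lineEmbedding_comp_id_prod]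
    exact congrFun (hl x) T
  refine ⟨lineEmbedding l, lineEmbedding_injective l, fst_comp_lineEmbedding l, fun U hU ↦ ?_⟩
  obtain ⟨x, hx⟩ := exists_eq_map_id_prod_of_disjoint_ker_fst hU
  beta_reduce
  rw [← map_inl, LinearMap.inl_eq_prod, hgraph 0, ← hgraph x, ← hx]

end HalesJewett

section Ramsey

variable {F W κ : Type*} [Field F] [Finite F] [AddCommGroup W] [Module F W] [Finite κ]

lemma exists_ramseyArrow_of_dependsOnShadow {E : Type*} [AddCommGroup E] [Module F E]
    [FiniteDimensional F E] {p : E →ₗ[F] W} {d : ℕ} {s : κ → ℕ}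
    (h : ∀ χ : Submodule F (E × F) → κ, DependsOnShadow χ →
      ∃ c S, Covers (p ∘ₗ LinearMap.fst F E F) (s c) S ∧
        IsMonochromatic (p ∘ₗ LinearMap.fst F E F) d χ c S) :
    ∃ n, RamseyArrow (LinearMap.fst F W (Fin n → F)) d s := by
  obtain ⟨ι, _, hι⟩ := exists_dependsOnShadow F E κ
  have harrow : RamseyArrow (p ∘ₗ LinearMap.fst F E (ι → F)) d s := fun χ ↦ by
    obtain ⟨J, hJ, hfst, hχ⟩ := hι χ
    obtain ⟨c, S, hS, hSc⟩ := h _ hχ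
    rw [← hfst, ← LinearMap.comp_assoc] at hS hSc
    exact ⟨c, S.map J, (covers_map_iff hJ).2 hS, hSc.map hJ⟩
  exact harrow.exists_fst

variable [FiniteDimensional F W]

variable (F W κ) in
lemma exists_ramseyArrow_zero (m : ℕ) :
    ∃ n, RamseyArrow (LinearMap.fst F W (Fin n → F)) 0 (fun _ : κ ↦ m) := by
  induction m with
  | zero => exact ramseyArrow_id_zero.exists_fst
  | succ m ih =>
    obtain ⟨n, hn⟩ := ih
    refine exists_ramseyArrow_of_dependsOnShadow (p := LinearMap.fst F W (Fin n → F))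
      fun χ hχ ↦ ?_
    obtain ⟨c, S, hS, hSc⟩ := hn fun U ↦ χ (U.prod ⊥)
    exact ⟨c, S.prod ⊤, Covers.prod_top_iff.2 hS, hSc.prod_top_zero hχ⟩

lemma exists_ramseyArrow_succ {d : ℕ}
    (ih : ∀ m, ∃ n, RamseyArrow (LinearMap.fst F W (Fin n → F)) d (fun _ : κ ↦ m)) (s : κ → ℕ) :
    ∃ n, RamseyArrow (LinearMap.fst F W (Fin n → F)) (d + 1) s := by
  classical
  induction s using WellFoundedLT.induction with
  | ind s ihs =>
  by_cases hzero : ∃ c, s c = 0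
  · obtain ⟨c, hc⟩ := hzero
    exact (ramseyArrow_id_succ d hc).exists_fst
  push Not at hzero
  have hpred (c : κ) : s c - 1 + 1 = s c := Nat.sub_one_add_one (hzero c)
  choose M hM using fun c ↦ ihs (Function.update s c (s c - 1))
    (update_lt_self_iff.2 (Nat.sub_one_lt (hzero c)))
  obtain ⟨m, hm⟩ := Finite.exists_le M
  obtain ⟨n, hn⟩ := ih m
  refine exists_ramseyArrow_of_dependsOnShadow (p := LinearMap.fst F W (Fin n → F)) fun χ hχ ↦ ?_
  obtain ⟨c, S, hS, hcyl⟩ := hn fun U ↦ χ (U.prod ⊤)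
  obtain ⟨e, T, hTS, hT, hgraph⟩ := (hM c).exists_le_of_covers hS (hm c) fun U ↦ χ (U.prod ⊥)
  rcases eq_or_ne e c with rfl | hec
  · rw [Function.update_self] at hT
    exact ⟨e, T.prod ⊤, hpred e ▸ Covers.prod_top_iff.2 hT,
      hgraph.prod_top_succ hχ (hcyl.mono hTS)⟩
  · rw [Function.update_of_ne hec] at hT
    exact ⟨e, T.prod ⊥, hT.prod_bot, hgraph.prod_bot hχ⟩

variable (F W κ) in
theorem exists_ramseyArrow (d m : ℕ) :
    ∃ n, RamseyArrow (LinearMap.fst F W (Fin n → F)) d (fun _ : κ ↦ m) := by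
  induction d generalizing m with
  | zero => exact exists_ramseyArrow_zero F W κ m
  | succ d ih => exact exists_ramseyArrow_succ ih _

end Ramsey

theorem ramsey_for_K_A1_dim_le_one_general {F V W κ : Type*} [Field F] [Finite F]
    [AddCommGroup V] [Module F V] [AddCommGroup W] [Module F W] [Finite κ]
    (hV : Cardinal.aleph0 ≤ Module.rank F V) (π : V →ₗ[F] W)
    [FiniteDimensional F (LinearMap.range π)] (k : ℕ) {m : ℕ}
    (hm : finrank F (LinearMap.range π) ≤ m) :
    ∃ C : Submodule F V, FiniteDimensional F C ∧ C.map π = LinearMap.range π ∧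
      ∀ ξ : Submodule F V → κ, ∃ B' ≤ C, B'.map π = LinearMap.range π ∧ finrank F B' = m ∧
        ∀ U U' : Submodule F V,
          U ≤ B' → U.map π = LinearMap.range π → finrank F U = k →
          U' ≤ B' → U'.map π = LinearMap.range π → finrank F U' = k → ξ U = ξ U' := by
  obtain ⟨n, hn⟩ := exists_ramseyArrow F (LinearMap.range π) κ
    (k - finrank F (LinearMap.range π)) (m - finrank F (LinearMap.range π))
  obtain ⟨J, hJ, hπJ⟩ := exists_injective_comp_eq_fst π.surjective_rangeRestrict
    (natCast_le_rank_ker_of_aleph0_le_rank π.rangeRestrict hV n)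
  rw [← hπJ] at hn
  simp only [map_eq_range_iff_map_rangeRestrict_eq_top]
  refine ⟨LinearMap.range J, inferInstance, ?_, fun ξ ↦ ?_⟩
  · rw [← LinearMap.range_comp, hπJ, range_fst]
  obtain ⟨c, S, hSJ, hS, hSc⟩ := hn.exists_le_range hJ ξ
  have hcolor (U : Submodule F V) (hUS : U ≤ S) (hU : U.map π.rangeRestrict = ⊤)
      (hUk : finrank F U = k) : ξ U = c := by
    have : FiniteDimensional F U := finiteDimensional_of_le (hUS.trans hSJ)
    have hle := finrank_map_le π.rangeRestrict U
    rw [hU, finrank_top, hUk] at hle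
    exact hSc U hUS ⟨hU, hUk.trans (Nat.add_sub_of_le hle).symm⟩
  exact ⟨S, hSJ, hS.map_eq_top, hS.finrank_eq.trans (Nat.add_sub_of_le hm),
    fun U U' hUS hU hUk hUS' hU' hUk' ↦
      (hcolor U hUS hU hUk).trans (hcolor U' hUS' hU' hUk').symm⟩

/-- `V` is a countably infinite dimensional vector space over `GF(2)`, `π` an idempotent
linear map with finite dimensional image `A1` of dimension at most `1`, and `A` a finite
dimensional subspace with `A1 < A`.  Then the family `K_{A1}` of finite dimensional
subspaces `U` with `π(U) = A1` has the Ramsey property with respect to copies of `A` in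
copies of `B ∈ K_{A1}`. -/
theorem ramsey_for_K_A1_dim_le_one
    (V : Type*) [AddCommGroup V] [Module (ZMod 2) V]
    (hrank : Module.rank (ZMod 2) V = Cardinal.aleph0)
    (π : V →ₗ[ZMod 2] V) (hidem : π ∘ₗ π = π)
    (A1 : Submodule (ZMod 2) V) (hA1 : LinearMap.range π = A1)
    (hA1fin : FiniteDimensional (ZMod 2) A1)
    (hA1dim : finrank (ZMod 2) A1 ≤ 1)
    (A : Submodule (ZMod 2) V)
    (hAfin : FiniteDimensional (ZMod 2) A)
    (hA1A : A1 < A)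
    (r : ℕ) (B : Submodule (ZMod 2) V)
    (hBfin : FiniteDimensional (ZMod 2) B)
    (hBK : Submodule.map π B = A1)
    (hAB : A ≤ B) :
    ∃ C : Submodule (ZMod 2) V,
      FiniteDimensional (ZMod 2) C ∧ Submodule.map π C = A1 ∧
      ∀ ξ : Submodule (ZMod 2) V → Fin r,
        ∃ B' : Submodule (ZMod 2) V,
          B' ≤ C ∧ Submodule.map π B' = A1 ∧
          finrank (ZMod 2) B' = finrank (ZMod 2) B ∧
          ∀ U U' : Submodule (ZMod 2) V,
            U ≤ B' → Submodule.map π U = A1 → finrank (ZMod 2) U = finrank (ZMod 2) A →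
            U' ≤ B' → Submodule.map π U' = A1 → finrank (ZMod 2) U' = finrank (ZMod 2) A →
            ξ U = ξ U' := by
  subst hA1
  exact ramsey_for_K_A1_dim_le_one_general hrank.ge π _ (finrank_mono (hA1A.le.trans hAB))
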